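/- Let N ≥ 1 and let ι_1, …, ι_N be finite types; write Σ = ι_1 × ⋯ × ι_N for the product type. Let P be a transition matrix over Σ with strictly positive stationary probability vector μ, and γ ∈ [0,1). For each agent i, let r_i : ι_i → ℝ with ‖r_i‖_∞ ≤ R_i, and suppose there is a transition matrix M_i over ι_i such that for every x : ι_i → ℝ with ‖x‖_∞ ≤ 1, (1/2) ‖ P · lift_i(x) − lift_i(M_i x) ‖_μ ≤ ε_i. Define, for each i, the marginalized local transition matrix P_i over ι_i by P_i u u' = ∑_{s : s_i = u} (μ(s)/μ_i(u)) · ∑_{s' : s'_i = u'} P s s', where μ_i(u) = ∑_{s : s_i = u} μ(s) > 0, and set Q = (I − γP)^{-1}( ∑_{i=1}^N lift_i(r_i) ) and Q_i = (I − γP_i)^{-1} r_i. Then: (i) for every i and every x : ι_i → ℝ with ‖x‖_∞ ≤ 1, ‖(P_i − M_i) x‖_{μ_i} ≤ 2ε_i; and (ii) ‖ Q − ∑_{i=1}^N lift_i(Q_i) ‖_μ ≤ 4γ ( ∑_{i=1}^N ε_i R_i ) / (1 − γ)². -/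

import Mathlib

open Matrix Finset

/-- A transition matrix: nonnegative entries, each row sums to 1. -/
def IsTransition {ι : Type*} [Fintype ι] (P : Matrix ι ι ℝ) : Prop :=
  (∀ i j, 0 ≤ P i j) ∧ ∀ i, ∑ j, P i j = 1

/-- Marginal of `μ` on coordinate `i`. -/
def marginPi {N : ℕ} {ι : Fin N → Type*} [∀ i, Fintype (ι i)] [∀ i, DecidableEq (ι i)]
    (μ : (∀ i, ι i) → ℝ) (i : Fin N) (u : ι i) : ℝ :=
  ∑ s ∈ Finset.univ.filter (fun s : ∀ i, ι i => s i = u), μ s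

/-- The marginalized local transition matrix of agent `i`. -/
noncomputable def localPi {N : ℕ} {ι : Fin N → Type*} [∀ i, Fintype (ι i)]
    [∀ i, DecidableEq (ι i)]
    (P : Matrix (∀ i, ι i) (∀ i, ι i) ℝ) (μ : (∀ i, ι i) → ℝ) (i : Fin N) :
    Matrix (ι i) (ι i) ℝ :=
  Matrix.of fun u u' =>
    ∑ s ∈ Finset.univ.filter (fun s : ∀ i, ι i => s i = u),
      (μ s / marginPi μ i u) *
        ∑ s' ∈ Finset.univ.filter (fun s' : ∀ i, ι i => s' i = u'), P s s'

/-- Sup-norm bound for solutions of the discounted Bellman equation. -/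
theorem IsTransition.abs_le_of_bellman {κ : Type*} [Fintype κ] {A : Matrix κ κ ℝ}
    (hA : IsTransition A) {γ : ℝ} (hγ0 : 0 ≤ γ) (hγ1 : γ < 1) {b y : κ → ℝ} {R : ℝ}
    (hb : ∀ u, |b u| ≤ R) (hy : ∀ u, y u = b u + γ * A.mulVec y u) (u : κ) :
    |y u| ≤ R / (1 - γ) := by
  obtain ⟨m, -, hm⟩ := Finset.exists_max_image Finset.univ (fun v => |y v|) ⟨u, Finset.mem_univ u⟩
  have hAy : |A.mulVec y m| ≤ |y m| := by
    calc |A.mulVec y m| ≤ ∑ v, |A m v * y v| := Finset.abs_sum_le_sum_abs _ _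
      _ ≤ ∑ v, A m v * |y m| := by
          refine Finset.sum_le_sum fun v _ => ?_
          rw [abs_mul, abs_of_nonneg (hA.1 m v)]
          exact mul_le_mul_of_nonneg_left (hm v (Finset.mem_univ v)) (hA.1 m v)
      _ = |y m| := by rw [← Finset.sum_mul, hA.2, one_mul]
  have hym : |y m| ≤ R + γ * |y m| := by
    calc |y m| = |b m + γ * A.mulVec y m| := by rw [← hy m]
      _ ≤ |b m| + |γ * A.mulVec y m| := abs_add_le _ _
      _ ≤ R + γ * |y m| := by
          rw [abs_mul, abs_of_nonneg hγ0]
          exact add_le_add (hb m) (mul_le_mul_of_nonneg_left hAy hγ0)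
  refine (hm u (Finset.mem_univ u)).trans ?_
  rw [le_div_iff₀ (by linarith)]
  linarith

theorem one_sub_smul_mulVec_apply {κ : Type*} [Fintype κ] [DecidableEq κ] (A : Matrix κ κ ℝ)
    (γ : ℝ) (y : κ → ℝ) (u : κ) :
    (1 - γ • A).mulVec y u = y u - γ * A.mulVec y u := by
  simp [Matrix.sub_mulVec, Matrix.smul_mulVec]

theorem IsTransition.isUnit_one_sub_smul {κ : Type*} [Fintype κ] [DecidableEq κ]
    {A : Matrix κ κ ℝ} (hA : IsTransition A) {γ : ℝ} (hγ0 : 0 ≤ γ) (hγ1 : γ < 1) :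
    IsUnit (1 - γ • A) := by
  rw [← Matrix.mulVec_injective_iff_isUnit]
  intro y z hyz
  have hw : (1 - γ • A).mulVec (y - z) = 0 := by
    rw [Matrix.mulVec_sub, sub_eq_zero]
    exact hyz
  have hzero : ∀ u, |(y - z) u| ≤ 0 / (1 - γ) := by
    refine hA.abs_le_of_bellman hγ0 hγ1 (b := 0) (fun u => by simp) fun u => ?_
    have h := congrFun hw u
    rw [one_sub_smul_mulVec_apply] at h
    simp only [Pi.zero_apply] at h ⊢
    linarith
  funext u
  have h := hzero u
  rw [zero_div] at h
  exact sub_eq_zero.mp (abs_nonpos_iff.mp h)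

/-- The discounted value function solves the Bellman equation. -/
theorem IsTransition.bellman {κ : Type*} [Fintype κ] [DecidableEq κ]
    {A : Matrix κ κ ℝ} (hA : IsTransition A) {γ : ℝ} (hγ0 : 0 ≤ γ) (hγ1 : γ < 1)
    (b : κ → ℝ) (u : κ) :
    ((1 - γ • A)⁻¹).mulVec b u = b u + γ * A.mulVec (((1 - γ • A)⁻¹).mulVec b) u := by
  have hdet := (Matrix.isUnit_iff_isUnit_det _).mp (hA.isUnit_one_sub_smul hγ0 hγ1)
  have h : (1 - γ • A).mulVec (((1 - γ • A)⁻¹).mulVec b) u = b u := by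
    rw [Matrix.mulVec_mulVec, Matrix.mul_nonsing_inv _ hdet, Matrix.one_mulVec]
  rw [one_sub_smul_mulVec_apply] at h
  linarith

/-- A transition matrix is nonexpansive in the weighted `ℓ¹` norm of a stationary vector. -/
theorem IsTransition.sum_mul_abs_mulVec_le {κ : Type*} [Fintype κ] {A : Matrix κ κ ℝ}
    (hA : IsTransition A) {μ : κ → ℝ} (hμ : ∀ s, 0 ≤ μ s)
    (hstat : ∀ s', ∑ s, μ s * A s s' = μ s') (y : κ → ℝ) :
    ∑ s, μ s * |A.mulVec y s| ≤ ∑ s, μ s * |y s| := by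
  calc ∑ s, μ s * |A.mulVec y s| ≤ ∑ s, μ s * ∑ s', A s s' * |y s'| := by
        refine Finset.sum_le_sum fun s _ => mul_le_mul_of_nonneg_left ?_ (hμ s)
        refine (Finset.abs_sum_le_sum_abs _ _).trans (Finset.sum_le_sum fun s' _ => ?_)
        rw [abs_mul, abs_of_nonneg (hA.1 s s')]
    _ = ∑ s', (∑ s, μ s * A s s') * |y s'| := by
        simp only [Finset.mul_sum, Finset.sum_mul, ← mul_assoc]
        exact Finset.sum_comm
    _ = ∑ s, μ s * |y s| := by simp only [hstat]

/-- Weighted `ℓ¹` bound for solutions of the discounted Bellman equation. -/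
theorem IsTransition.sum_mul_abs_le_of_bellman {κ : Type*} [Fintype κ] {A : Matrix κ κ ℝ}
    (hA : IsTransition A) {μ : κ → ℝ} (hμ : ∀ s, 0 ≤ μ s)
    (hstat : ∀ s', ∑ s, μ s * A s s' = μ s') {γ : ℝ} (hγ0 : 0 ≤ γ) (hγ1 : γ < 1)
    {b y : κ → ℝ} (hy : ∀ u, y u = b u + γ * A.mulVec y u) :
    ∑ s, μ s * |y s| ≤ (∑ s, μ s * |b s|) / (1 - γ) := by
  have hsplit : ∑ s, μ s * |y s| ≤ ∑ s, μ s * |b s| + γ * ∑ s, μ s * |A.mulVec y s| := by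
    rw [Finset.mul_sum, ← Finset.sum_add_distrib]
    refine Finset.sum_le_sum fun s _ => ?_
    calc μ s * |y s| = μ s * |b s + γ * A.mulVec y s| := by rw [← hy s]
      _ ≤ μ s * (|b s| + |γ * A.mulVec y s|) :=
          mul_le_mul_of_nonneg_left (abs_add_le _ _) (hμ s)
      _ = μ s * |b s| + γ * (μ s * |A.mulVec y s|) := by
          rw [abs_mul, abs_of_nonneg hγ0]
          ring
  have hcontr := mul_le_mul_of_nonneg_left (hA.sum_mul_abs_mulVec_le hμ hstat y) hγ0
  rw [le_div_iff₀ (by linarith)]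
  linarith

/-- An operator discrepancy bound on the unit ball scales to balls of any radius. -/
theorem sum_mul_abs_mulVec_sub_le_of_unit_ball {κ τ : Type*} [Fintype κ] [Fintype τ]
    {ν : τ → ℝ} {A B : Matrix τ κ ℝ} {c : ℝ}
    (h : ∀ x : κ → ℝ, (∀ u, |x u| ≤ 1) → ∑ s, ν s * |A.mulVec x s - B.mulVec x s| ≤ c)
    {C : ℝ} (hC : 0 ≤ C) {x : κ → ℝ} (hx : ∀ u, |x u| ≤ C) :
    ∑ s, ν s * |A.mulVec x s - B.mulVec x s| ≤ c * C := by
  rcases hC.eq_or_lt with rfl | hC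
  · have hx0 : x = 0 := funext fun u => abs_nonpos_iff.mp (hx u)
    simp [hx0]
  · have hunit := h (C⁻¹ • x) fun u => by
      rw [Pi.smul_apply, smul_eq_mul, abs_mul, abs_of_pos (inv_pos.mpr hC), inv_mul_le_iff₀ hC,
        mul_one]
      exact hx u
    have hscale : ∑ s, ν s * |A.mulVec (C⁻¹ • x) s - B.mulVec (C⁻¹ • x) s|
        = C⁻¹ * ∑ s, ν s * |A.mulVec x s - B.mulVec x s| := by
      rw [Finset.mul_sum]
      refine Finset.sum_congr rfl fun s _ => ?_
      rw [Matrix.mulVec_smul, Matrix.mulVec_smul, Pi.smul_apply, Pi.smul_apply, ← smul_sub,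
        smul_eq_mul, abs_mul, abs_of_pos (inv_pos.mpr hC)]
      ring
    rw [hscale, inv_mul_le_iff₀ hC] at hunit
    linarith

section Marginal

variable {N : ℕ} {ι : Fin N → Type*} [∀ i, Fintype (ι i)] [∀ i, DecidableEq (ι i)]

theorem sum_marginPi_mul (μ : (∀ i, ι i) → ℝ) (i : Fin N) (f : ι i → ℝ) :
    ∑ u, marginPi μ i u * f u = ∑ s, μ s * f (s i) := by
  rw [← Finset.sum_fiberwise Finset.univ (fun s : ∀ i, ι i => s i)]
  refine Finset.sum_congr rfl fun u _ => ?_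
  rw [marginPi, Finset.sum_mul]
  refine Finset.sum_congr rfl fun s hs => ?_
  rw [(Finset.mem_filter.mp hs).2]

theorem marginPi_pos [Nonempty (∀ i, ι i)] {μ : (∀ i, ι i) → ℝ} (hμ : ∀ s, 0 < μ s)
    (i : Fin N) (u : ι i) : 0 < marginPi μ i u := by
  obtain ⟨s⟩ := ‹Nonempty (∀ i, ι i)›
  exact Finset.sum_pos (fun s _ => hμ s) ⟨Function.update s i u, by simp⟩

/-- The matrix sending a local vector `x` to `P` applied to the lift of `x`. -/
def liftedTransition (P : Matrix (∀ i, ι i) (∀ i, ι i) ℝ) (i : Fin N) :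
    Matrix (∀ i, ι i) (ι i) ℝ :=
  Matrix.of fun s u => ∑ s' ∈ Finset.univ.filter (fun s' : ∀ i, ι i => s' i = u), P s s'

theorem liftedTransition_mulVec (P : Matrix (∀ i, ι i) (∀ i, ι i) ℝ) (i : Fin N) (x : ι i → ℝ)
    (s : ∀ i, ι i) :
    (liftedTransition P i).mulVec x s = P.mulVec (fun t => x (t i)) s :=
  sum_marginPi_mul (P s) i x

theorem marginPi_mul_localPi_mulVec [Nonempty (∀ i, ι i)]
    (P : Matrix (∀ i, ι i) (∀ i, ι i) ℝ) {μ : (∀ i, ι i) → ℝ} (hμ : ∀ s, 0 < μ s)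
    (i : Fin N) (x : ι i → ℝ) (u : ι i) :
    marginPi μ i u * (localPi P μ i).mulVec x u =
      ∑ s ∈ Finset.univ.filter (fun s : ∀ i, ι i => s i = u),
        μ s * P.mulVec (fun t => x (t i)) s := by
  have hne := (marginPi_pos hμ i u).ne'
  simp only [← liftedTransition_mulVec]
  simp only [Matrix.mulVec, dotProduct, localPi, liftedTransition, Matrix.of_apply,
    Finset.mul_sum (Finset.univ : Finset (ι i))]
  rw [Finset.sum_comm]
  refine Finset.sum_congr rfl fun v _ => ?_
  rw [Finset.sum_mul, Finset.mul_sum]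
  refine Finset.sum_congr rfl fun s _ => ?_
  field_simp

theorem isTransition_localPi [Nonempty (∀ i, ι i)] {P : Matrix (∀ i, ι i) (∀ i, ι i) ℝ}
    (hP : IsTransition P) {μ : (∀ i, ι i) → ℝ} (hμ : ∀ s, 0 < μ s) (i : Fin N) :
    IsTransition (localPi P μ i) := by
  refine ⟨fun u v => ?_, fun u => ?_⟩
  · exact Finset.sum_nonneg fun s _ => mul_nonneg (div_nonneg (hμ s).le (marginPi_pos hμ i u).le)
      (Finset.sum_nonneg fun s' _ => hP.1 s s')
  · have h := marginPi_mul_localPi_mulVec P hμ i (fun _ => 1) u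
    simp only [Matrix.mulVec, dotProduct, mul_one, hP.2] at h
    exact mul_left_cancel₀ (marginPi_pos hμ i u).ne' (h.trans (mul_one _).symm)

/-- Averaging over fibers does not increase the distance to a local operator. -/
theorem sum_marginPi_mul_abs_localPi_sub_le [Nonempty (∀ i, ι i)]
    (P : Matrix (∀ i, ι i) (∀ i, ι i) ℝ) {μ : (∀ i, ι i) → ℝ} (hμ : ∀ s, 0 < μ s)
    (i : Fin N) (x y : ι i → ℝ) :
    ∑ u, marginPi μ i u * |(localPi P μ i).mulVec x u - y u| ≤
      ∑ s, μ s * |P.mulVec (fun t => x (t i)) s - y (s i)| := by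
  rw [← Finset.sum_fiberwise Finset.univ (fun s : ∀ i, ι i => s i)
    (fun s => μ s * |P.mulVec (fun t => x (t i)) s - y (s i)|)]
  refine Finset.sum_le_sum fun u _ => ?_
  have hfiber : marginPi μ i u * ((localPi P μ i).mulVec x u - y u) =
      ∑ s ∈ Finset.univ.filter (fun s : ∀ i, ι i => s i = u),
        μ s * (P.mulVec (fun t => x (t i)) s - y (s i)) := by
    rw [mul_sub, marginPi_mul_localPi_mulVec P hμ, marginPi, Finset.sum_mul,
      ← Finset.sum_sub_distrib]
    refine Finset.sum_congr rfl fun s hs => ?_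
    rw [(Finset.mem_filter.mp hs).2, mul_sub]
  calc marginPi μ i u * |(localPi P μ i).mulVec x u - y u|
      = |marginPi μ i u * ((localPi P μ i).mulVec x u - y u)| := by
        rw [abs_mul, abs_of_pos (marginPi_pos hμ i u)]
    _ ≤ _ := by
        rw [hfiber]
        refine (Finset.abs_sum_le_sum_abs _ _).trans (Finset.sum_le_sum fun s _ => ?_)
        rw [abs_mul, abs_of_pos (hμ s)]

end Marginal

/-- Multi-agent value decomposition error in `μ`-norm bounded by the agent-wise
`μ`-weighted total-variation entanglement measures. -/
theorem stmt14 (N : ℕ) (hN : 1 ≤ N) (ι : Fin N → Type*) [∀ i, Fintype (ι i)]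
    [∀ i, DecidableEq (ι i)]
    (P : Matrix (∀ i, ι i) (∀ i, ι i) ℝ) (hP : IsTransition P)
    (μ : (∀ i, ι i) → ℝ) (hμpos : ∀ s, 0 < μ s) (hμsum : ∑ s, μ s = 1)
    (hstat : ∀ s', ∑ s, μ s * P s s' = μ s')
    (γ : ℝ) (hγ0 : 0 ≤ γ) (hγ1 : γ < 1)
    (r : ∀ i, ι i → ℝ) (R : Fin N → ℝ) (hr : ∀ i u, |r i u| ≤ R i)
    (M : ∀ i, Matrix (ι i) (ι i) ℝ) (hM : ∀ i, IsTransition (M i))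
    (ε : Fin N → ℝ)
    (hATV : ∀ (i : Fin N) (x : ι i → ℝ), (∀ u, |x u| ≤ 1) →
      (1 / 2 : ℝ) * ∑ s, μ s * |P.mulVec (fun t => x (t i)) s - ((M i).mulVec x) (s i)|
        ≤ ε i) :
    (∀ (i : Fin N) (x : ι i → ℝ), (∀ u, |x u| ≤ 1) →
      ∑ u, marginPi μ i u * |(localPi P μ i).mulVec x u - (M i).mulVec x u| ≤ 2 * ε i) ∧
    ∑ s, μ s * |((1 - γ • P)⁻¹).mulVec (fun t => ∑ i, r i (t i)) s
          - ∑ i, ((1 - γ • localPi P μ i)⁻¹).mulVec (r i) (s i)|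
      ≤ 4 * γ * (∑ i, ε i * R i) / (1 - γ) ^ 2 := by
  have hne : Nonempty (∀ i, ι i) := by
    by_contra h
    rw [not_nonempty_iff] at h
    simp at hμsum
  have hlocal : ∀ (i : Fin N) (x : ι i → ℝ), (∀ u, |x u| ≤ 1) →
      ∑ u, marginPi μ i u * |(localPi P μ i).mulVec x u - (M i).mulVec x u| ≤ 2 * ε i := by
    intro i x hx
    have h := hATV i x hx
    have h' := sum_marginPi_mul_abs_localPi_sub_le P hμpos i x ((M i).mulVec x)
    linarith
  refine ⟨hlocal, ?_⟩
  set q : ∀ i, ι i → ℝ := fun i => ((1 - γ • localPi P μ i)⁻¹).mulVec (r i)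
  set Q := ((1 - γ • P)⁻¹).mulVec (fun t => ∑ i, r i (t i))
  have hγ : 0 < 1 - γ := by linarith
  have hq : ∀ i u, q i u = r i u + γ * (localPi P μ i).mulVec (q i) u := fun i =>
    (isTransition_localPi hP hμpos i).bellman hγ0 hγ1 (r i)
  have hQ : ∀ s, Q s = ∑ i, r i (s i) + γ * P.mulVec Q s := hP.bellman hγ0 hγ1 _
  have hqbound : ∀ i u, |q i u| ≤ R i / (1 - γ) := fun i =>
    (isTransition_localPi hP hμpos i).abs_le_of_bellman hγ0 hγ1 (hr i) (hq i)
  have hR : ∀ i, 0 ≤ R i / (1 - γ) := fun i =>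
    (abs_nonneg _).trans (hqbound i (hne.some i))
  have hagent : ∀ i, ∑ s, μ s * |P.mulVec (fun t => q i (t i)) s
      - (localPi P μ i).mulVec (q i) (s i)| ≤ 4 * ε i * (R i / (1 - γ)) := by
    intro i
    have hglobal : ∑ s, μ s * |P.mulVec (fun t => q i (t i)) s - (M i).mulVec (q i) (s i)|
        ≤ 2 * ε i * (R i / (1 - γ)) := by
      have h := sum_mul_abs_mulVec_sub_le_of_unit_ball (ν := μ) (A := liftedTransition P i)
        (B := (M i).submatrix (fun s : ∀ i, ι i => s i) id) (c := 2 * ε i) (fun x hx => by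
          have h := hATV i x hx
          simp only [liftedTransition_mulVec]
          change ∑ s, μ s * |P.mulVec (fun t => x (t i)) s - (M i).mulVec x (s i)| ≤ _
          linarith) (hR i) (hqbound i)
      simp only [liftedTransition_mulVec] at h
      exact h
    have hmarg := sum_mul_abs_mulVec_sub_le_of_unit_ball (hlocal i) (hR i) (hqbound i)
    rw [sum_marginPi_mul μ i (fun u => |(localPi P μ i).mulVec (q i) u - (M i).mulVec (q i) u|)]
      at hmarg
    calc _ ≤ ∑ s, (μ s * |P.mulVec (fun t => q i (t i)) s - (M i).mulVec (q i) (s i)|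
          + μ s * |(localPi P μ i).mulVec (q i) (s i) - (M i).mulVec (q i) (s i)|) := by
          refine Finset.sum_le_sum fun s _ => ?_
          rw [← mul_add]
          refine mul_le_mul_of_nonneg_left ?_ (hμpos s).le
          rw [abs_sub_comm ((localPi P μ i).mulVec (q i) (s i))]
          exact abs_sub_le _ _ _
      _ ≤ 4 * ε i * (R i / (1 - γ)) := by
          rw [Finset.sum_add_distrib]
          linarith
  have hD : ∀ s, (Q - fun t : ∀ i, ι i => ∑ i, q i (t i)) s =
      γ * ∑ i, (P.mulVec (fun t => q i (t i)) s - (localPi P μ i).mulVec (q i) (s i))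
        + γ * P.mulVec (Q - fun t : ∀ i, ι i => ∑ i, q i (t i)) s := by
    intro s
    have hlift : P.mulVec (fun t => ∑ i, q i (t i)) s = ∑ i, P.mulVec (fun t => q i (t i)) s := by
      simp only [Matrix.mulVec, dotProduct, Finset.mul_sum]
      exact Finset.sum_comm
    have hsum : ∑ i, q i (s i) =
        ∑ i, r i (s i) + γ * ∑ i, (localPi P μ i).mulVec (q i) (s i) := by
      rw [Finset.mul_sum, ← Finset.sum_add_distrib]
      exact Finset.sum_congr rfl fun i _ => hq i (s i)
    rw [Matrix.mulVec_sub, Pi.sub_apply, Pi.sub_apply, hlift, Finset.sum_sub_distrib, hsum]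
    linarith [hQ s]
  refine (hP.sum_mul_abs_le_of_bellman (fun s => (hμpos s).le) hstat hγ0 hγ1 hD).trans ?_
  have herr : ∑ s, μ s * |γ * ∑ i, (P.mulVec (fun t => q i (t i)) s
      - (localPi P μ i).mulVec (q i) (s i))| ≤ γ * ∑ i, 4 * ε i * (R i / (1 - γ)) := by
    calc _ ≤ ∑ s, γ * ∑ i, μ s * |P.mulVec (fun t => q i (t i)) s
          - (localPi P μ i).mulVec (q i) (s i)| := by
          refine Finset.sum_le_sum fun s _ => ?_
          rw [abs_mul, abs_of_nonneg hγ0, mul_left_comm, ← Finset.mul_sum]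
          exact mul_le_mul_of_nonneg_left (mul_le_mul_of_nonneg_left
            (Finset.abs_sum_le_sum_abs _ _) (hμpos s).le) hγ0
      _ = γ * ∑ i, ∑ s, μ s * |P.mulVec (fun t => q i (t i)) s
          - (localPi P μ i).mulVec (q i) (s i)| := by
          rw [← Finset.mul_sum, Finset.sum_comm]
      _ ≤ _ := mul_le_mul_of_nonneg_left (Finset.sum_le_sum fun i _ => hagent i) hγ0
  calc _ ≤ (γ * ∑ i, 4 * ε i * (R i / (1 - γ))) / (1 - γ) :=
        div_le_div_of_nonneg_right herr hγ.le
    _ = 4 * γ * (∑ i, ε i * R i) / (1 - γ) ^ 2 := by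
        have hfac : ∑ i, 4 * ε i * (R i / (1 - γ)) = 4 / (1 - γ) * ∑ i, ε i * R i := by
          rw [Finset.mul_sum]
          exact Finset.sum_congr rfl fun i _ => by ring
        rw [hfac]
        field_simp
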